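/- The level-two Eisenstein-type series satisfy Ramamani's analogue of the Ramanujan system: for every τ ∈ ℍ, 𝒫'(τ) = (𝒫(τ)² − 𝒬(τ))/4, 𝒫̃'(τ) = (𝒫(τ)𝒫̃(τ) − 𝒬(τ))/2, and 𝒬'(τ) = (𝒫(τ) − 𝒫̃(τ))𝒬(τ). -/

import Mathlib

open Complex

noncomputable section

/-- The normalized derivative `F' = (2πi)⁻¹ dF/dτ`. -/
def nderiv (F : ℂ → ℂ) : ℂ → ℂ := fun τ => (2 * Real.pi * Complex.I)⁻¹ * deriv F τ

/-- `q = e^{2πiτ}`. -/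
def qq (τ : ℂ) : ℂ := Complex.exp (2 * Real.pi * Complex.I * τ)

/-- The level-two Eisenstein series `𝒫(τ) = 1 − 8 Σ_{n≥1} (−1)ⁿ n qⁿ/(1−qⁿ)`. -/
def EP : ℂ → ℂ := fun τ =>
  1 - 8 * ∑' n : ℕ, (-1 : ℂ) ^ (n + 1) * ((n : ℂ) + 1) * qq τ ^ (n + 1) / (1 - qq τ ^ (n + 1))

/-- The level-two Eisenstein series `𝒬(τ) = 1 + 16 Σ_{n≥1} (−1)ⁿ n³ qⁿ/(1−qⁿ)`. -/
def EQ : ℂ → ℂ := fun τ =>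
  1 + 16 * ∑' n : ℕ, (-1 : ℂ) ^ (n + 1) * ((n : ℂ) + 1) ^ 3 * qq τ ^ (n + 1) / (1 - qq τ ^ (n + 1))

/-- The level-two modular form `𝒫̃(τ) = 1 + 24 Σ_{n≥1} n qⁿ/(1+qⁿ)`. -/
def EPt : ℂ → ℂ := fun τ =>
  1 + 24 * ∑' n : ℕ, ((n : ℂ) + 1) * qq τ ^ (n + 1) / (1 + qq τ ^ (n + 1))


open UpperHalfPlane hiding I
open Filter Topology
open scoped ModularForm MatrixGroups

/-- Filter of complex numbers with imaginary part tending to infinity. -/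
def LL : Filter ℂ := comap Complex.im atTop

def bb (z : ℂ) : ℂ := EisensteinSeries.E2 (ofComplex z)
def e4 (z : ℂ) : ℂ := ModularForm.E₄ (ofComplex z)
def e6 (z : ℂ) : ℂ := ModularForm.E₆ (ofComplex z)

lemma bb_diff : DifferentiableOn ℂ bb {z | 0 < z.im} :=
  UpperHalfPlane.mdifferentiable_iff.mp E2_mdifferentiable
lemma e4_diff : DifferentiableOn ℂ e4 {z | 0 < z.im} :=
  UpperHalfPlane.mdifferentiable_iff.mp (ModularForm.E₄).holo'
lemma e6_diff : DifferentiableOn ℂ e6 {z | 0 < z.im} :=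
  UpperHalfPlane.mdifferentiable_iff.mp (ModularForm.E₆).holo'

lemma LL_ev (A : ℝ) : ∀ᶠ z in LL, A ≤ z.im :=
  (tendsto_comap (f := Complex.im) (x := atTop)).eventually (eventually_ge_atTop A)

lemma LL_tendsto_iff {F : ℂ → ℂ} {c : ℂ} :
    Tendsto F LL (𝓝 c) ↔ ∀ ε > 0, ∃ A : ℝ, ∀ z : ℂ, A ≤ z.im → ‖F z - c‖ < ε := by
  unfold LL
  rw [((atTop_basis (α := ℝ)).comap Complex.im).tendsto_iff Metric.nhds_basis_ball]
  simp [dist_eq_norm]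

lemma LL_deriv {F : ℂ → ℂ} {c : ℂ} (hF : DifferentiableOn ℂ F {z | 0 < z.im})
    (h : Tendsto F LL (𝓝 c)) : Tendsto (deriv F) LL (𝓝 0) := by
  rw [LL_tendsto_iff] at h ⊢
  intro ε hε
  obtain ⟨A, hA⟩ := h (ε / 2) (by positivity)
  refine ⟨max A 0 + 2, fun z hz => ?_⟩
  have hsub : Metric.closedBall z 1 ⊆ {w : ℂ | max A 0 < w.im} := by
    intro w hw
    have h1 : |(w - z).im| ≤ 1 := (Complex.abs_im_le_norm _).trans (by simpa [dist_eq_norm] using hw)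
    rw [Complex.sub_im, abs_le] at h1
    simp only [Set.mem_ofPred_eq]
    linarith [h1.1]
  have hd : deriv F z = deriv (fun w => F w - c) z := by simp
  rw [sub_zero, hd]
  have := Complex.norm_deriv_le_of_forall_mem_sphere_norm_le (f := fun w => F w - c) (c := z)
    (R := 1) (C := ε / 2) one_pos ?_ ?_
  · linarith
  · apply DifferentiableOn.diffContOnCl
    rw [closure_ball _ one_ne_zero]
    exact (hF.mono fun w hw => (lt_of_le_of_lt (le_max_right A 0) (hsub hw) : 0 < w.im)).sub_const c
  · intro w hw
    exact (hA w (le_trans (le_max_left _ _) (hsub (Metric.sphere_subset_closedBall hw)).le)).le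

lemma norm_qq (z : ℂ) : ‖Complex.exp (2 * Real.pi * I * z)‖ = Real.exp (-(2 * Real.pi) * z.im) := by
  rw [Complex.norm_exp]
  simp

lemma qq_tendsto : Tendsto (fun z => Complex.exp (2 * Real.pi * I * z)) LL (𝓝 0) := by
  rw [tendsto_zero_iff_norm_tendsto_zero]
  simp_rw [norm_qq]
  refine Real.tendsto_exp_atBot.comp ?_
  exact (tendsto_const_mul_atBot_of_neg (by linarith [Real.pi_pos])).2 tendsto_comap

lemma sigma_tendsto (k : ℕ) :
    Tendsto (fun z => ∑' n : ℕ+, (ArithmeticFunction.sigma k n : ℂ) *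
      Complex.exp (2 * Real.pi * I * z) ^ (n : ℕ)) LL (𝓝 0) := by
  have hb : Summable (fun n : ℕ+ => ((n : ℕ) : ℝ) ^ (k + 1) * (1 / 2 : ℝ) ^ (n : ℕ)) := by
    have := summable_pow_mul_geometric_of_norm_lt_one (R := ℝ) (k + 1) (r := 1 / 2) (by norm_num)
    exact this.comp_injective PNat.coe_injective
  have := tendsto_tsum_of_dominated_convergence (𝓕 := LL)
    (f := fun z (n : ℕ+) => (ArithmeticFunction.sigma k n : ℂ) * Complex.exp (2 * Real.pi * I * z) ^ (n : ℕ))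
    (g := fun _ => 0) hb ?_ ?_
  · simpa using this
  · intro n
    have := (qq_tendsto.pow (n : ℕ)).const_mul (ArithmeticFunction.sigma k n : ℂ)
    simpa using this
  · have h : ∀ᶠ z in LL, ‖Complex.exp (2 * Real.pi * I * z)‖ < 1 / 2 :=
      qq_tendsto.norm.eventually (gt_mem_nhds (by norm_num))
    filter_upwards [h] with z hz n
    rw [norm_mul, norm_pow, Complex.norm_natCast]
    gcongr
    exact_mod_cast ArithmeticFunction.sigma_le_pow_succ k n

lemma bb_eq {z : ℂ} (hz : 0 < z.im) : bb z = 1 - 24 * ∑' n : ℕ+, (ArithmeticFunction.sigma 1 n : ℂ) *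
      Complex.exp (2 * Real.pi * I * z) ^ (n : ℕ) := by
  rw [bb, EisensteinSeries.E2_eq_tsum_cexp, ofComplex_apply_of_im_pos hz]

lemma e4_eq {z : ℂ} (hz : 0 < z.im) : e4 z = 1 + 240 * ∑' n : ℕ+, (ArithmeticFunction.sigma 3 n : ℂ) *
      Complex.exp (2 * Real.pi * I * z) ^ (n : ℕ) := by
  rw [e4, EisensteinSeries.q_expansion_bernoulli _ ⟨2, rfl⟩, ofComplex_apply_of_im_pos hz]
  norm_num [show bernoulli 4 = -1 / 30 by decide +kernel]

lemma e6_eq {z : ℂ} (hz : 0 < z.im) : e6 z = 1 - 504 * ∑' n : ℕ+, (ArithmeticFunction.sigma 5 n : ℂ) *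
      Complex.exp (2 * Real.pi * I * z) ^ (n : ℕ) := by
  rw [e6, EisensteinSeries.q_expansion_bernoulli _ ⟨3, rfl⟩, ofComplex_apply_of_im_pos hz]
  norm_num [show bernoulli 6 = 1 / 42 by decide +kernel]

lemma bb_lim : Tendsto bb LL (𝓝 1) := by
  have := ((sigma_tendsto 1).const_mul 24).const_sub 1
  simp only [mul_zero, sub_zero] at this
  refine this.congr' ?_
  filter_upwards [LL_ev 1] with z hz
  rw [bb_eq (by linarith)]

lemma e4_lim : Tendsto e4 LL (𝓝 1) := by
  have := ((sigma_tendsto 3).const_mul 240).const_add 1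
  simp only [mul_zero, add_zero] at this
  refine this.congr' ?_
  filter_upwards [LL_ev 1] with z hz
  rw [e4_eq (by linarith)]

lemma e6_lim : Tendsto e6 LL (𝓝 1) := by
  have := ((sigma_tendsto 5).const_mul 504).const_sub 1
  simp only [mul_zero, sub_zero] at this
  refine this.congr' ?_
  filter_upwards [LL_ev 1] with z hz
  rw [e6_eq (by linarith)]

lemma qq_add_one (z : ℂ) : Complex.exp (2 * Real.pi * I * (z + 1)) = Complex.exp (2 * Real.pi * I * z) := by
  rw [mul_add, mul_one, Complex.exp_add, Complex.exp_two_pi_mul_I, mul_one]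

lemma bb_T {z : ℂ} (hz : 0 < z.im) : bb (z + 1) = bb z := by
  rw [bb_eq hz, bb_eq (by simpa using hz), qq_add_one]
lemma e4_T {z : ℂ} (hz : 0 < z.im) : e4 (z + 1) = e4 z := by
  rw [e4_eq hz, e4_eq (by simpa using hz), qq_add_one]
lemma e6_T {z : ℂ} (hz : 0 < z.im) : e6 (z + 1) = e6 z := by
  rw [e6_eq hz, e6_eq (by simpa using hz), qq_add_one]

lemma im_S {z : ℂ} (hz : 0 < z.im) : 0 < (-1 / z).im := by
  have := UpperHalfPlane.im_inv_neg_coe_pos ⟨z, hz⟩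
  rwa [inv_neg, ← one_div, ← neg_div] at this

lemma bb_S {z : ℂ} (hz : 0 < z.im) : bb (-1 / z) = z ^ 2 * bb z + 6 * z / (Real.pi * I) := by
  have h := congrFun (EisensteinSeries.E2_slash_action ModularGroup.S) ⟨z, hz⟩
  rw [SlashInvariantForm.slash_S_apply] at h
  have hz0 : z ≠ 0 := by rintro rfl; simp at hz
  simp only [Pi.sub_apply, Pi.smul_apply, EisensteinSeries.D2_S, riemannZeta_two, smul_eq_mul] at h
  rw [bb, bb, ofComplex_apply_of_im_pos hz, ofComplex_apply_of_im_pos (im_S hz)]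
  have e : (-1 / z) = (-z)⁻¹ := by field_simp
  have hpi : (Real.pi : ℂ) ≠ 0 := by exact_mod_cast Real.pi_ne_zero
  simp only [e]
  rw [zpow_neg, mul_inv_eq_iff_eq_mul₀ (by simpa using hz0)] at h
  rw [h]
  have hI : I * I = -1 := Complex.I_mul_I
  have hI0 := Complex.I_ne_zero
  simp only [zpow_ofNat]
  field_simp
  linear_combination (-6 : ℂ) * Complex.I_sq

lemma mf_S {k : ℕ} (f : ModularForm 𝒮ℒ (k : ℤ)) {z : ℂ} (hz : 0 < z.im) :
    f (ofComplex (-1 / z)) = z ^ k * f (ofComplex z) := by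
  have h := congrFun (f.slash_action_eq' _ ⟨ModularGroup.S, rfl⟩) ⟨z, hz⟩
  have h' : ((f : ℍ → ℂ) ∣[(k : ℤ)] ModularGroup.S) ⟨z, hz⟩ = f ⟨z, hz⟩ := h
  rw [SlashInvariantForm.slash_S_apply] at h'
  have hz0 : z ≠ 0 := by rintro rfl; simp at hz
  rw [ofComplex_apply_of_im_pos hz, ofComplex_apply_of_im_pos (im_S hz)]
  have e : (-1 / z) = (-z)⁻¹ := by field_simp
  simp only [e]
  rw [zpow_neg, mul_inv_eq_iff_eq_mul₀ (zpow_ne_zero _ hz0)] at h'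
  rw [h', mul_comm]
  simp

lemma e4_S {z : ℂ} (hz : 0 < z.im) : e4 (-1 / z) = z ^ 4 * e4 z := mf_S (k := 4) ModularForm.E₄ hz
lemma e6_S {z : ℂ} (hz : 0 < z.im) : e6 (-1 / z) = z ^ 6 * e6 z := mf_S (k := 6) ModularForm.E₆ hz

/-- A holomorphic function with level one transformation laws of weight `< 12`, vanishing at
infinity, is zero. -/
lemma vanish (k : ℕ) (hk : k < 12) (F : ℂ → ℂ) (hF : DifferentiableOn ℂ F {z | 0 < z.im})
    (hT : ∀ z : ℂ, 0 < z.im → F (z + 1) = F z)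
    (hS : ∀ z : ℂ, 0 < z.im → F (-1 / z) = z ^ k * F z)
    (h0 : Tendsto F LL (𝓝 0)) {z : ℂ} (hz : 0 < z.im) : F z = 0 := by
  let f : ℍ → ℂ := fun τ => F τ
  have fS : f ∣[(k : ℤ)] ModularGroup.S = f := by
    ext τ
    have hz0 : (τ : ℂ) ≠ 0 := τ.ne_zero
    have e : (-1 / (τ : ℂ)) = (-(τ : ℂ))⁻¹ := by field_simp
    have := hS τ τ.2
    rw [e] at this
    rw [SlashInvariantForm.slash_S_apply]
    change F ((-(τ : ℂ))⁻¹) * _ = F τ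
    rw [this, zpow_neg, zpow_natCast]
    field_simp
  have fT : f ∣[(k : ℤ)] ModularGroup.T = f := by
    ext τ
    rw [ModularForm.SL_slash_apply, modular_T_smul, ModularGroup.denom_apply]
    have := hT τ τ.2
    have c0 : ModularGroup.T 1 0 = 0 := rfl
    have c1 : ModularGroup.T 1 1 = 1 := rfl
    simp [f, c0, c1, add_comm (1 : ℂ), this]
  have finv := SlashInvariantForm.slash_action_generators_SL2Z fS fT
  have fz : IsZeroAtImInfty f := by
    refine h0.comp ?_
    rw [LL, tendsto_comap_iff]
    exact tendsto_comap
  let c : CuspForm 𝒮ℒ (k : ℤ) :=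
    { toFun := f
      slash_action_eq' := by
        rintro A ⟨A, rfl⟩
        exact finv A
      holo' := by
        rw [UpperHalfPlane.mdifferentiable_iff]
        refine hF.congr fun w hw => ?_
        simp [f, ofComplex_apply_of_im_pos hw]
      zero_at_cusps' := by
        intro c hc
        rw [Subgroup.IsArithmetic.isCusp_iff_isCusp_SL2Z] at hc
        rw [OnePoint.isZeroAt_iff_forall_SL2Z hc]
        intro γ _
        rw [finv]
        exact fz }
  have hc : c = 0 := rank_zero_iff_forall_zero.mp
    (CuspForm.rank_eq_zero_of_weight_lt_twelve (k := (k : ℤ)) (by exact_mod_cast hk)) c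
  have := congrArg (fun g : CuspForm 𝒮ℒ (k : ℤ) => g ⟨z, hz⟩) hc
  exact this

lemma isOpen_H : IsOpen {z : ℂ | 0 < z.im} := isOpen_lt continuous_const Complex.continuous_im

lemma hd_of {F : ℂ → ℂ} (hF : DifferentiableOn ℂ F {z | 0 < z.im}) {z : ℂ} (hz : 0 < z.im) :
    HasDerivAt F (deriv F z) z :=
  (hF.differentiableAt (isOpen_H.mem_nhds hz)).hasDerivAt

lemma deriv_T {F : ℂ → ℂ} (hT : ∀ z : ℂ, 0 < z.im → F (z + 1) = F z) {z : ℂ} (hz : 0 < z.im) :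
    deriv F (z + 1) = deriv F z := by
  rw [← deriv_comp_add_const]
  apply Filter.EventuallyEq.deriv_eq
  filter_upwards [isOpen_H.mem_nhds hz] with w hw using hT w hw

lemma deriv_S {F G : ℂ → ℂ} {G' : ℂ} (hF : DifferentiableOn ℂ F {z | 0 < z.im})
    (hS : ∀ z : ℂ, 0 < z.im → F (-1 / z) = G z) {z : ℂ} (hz : 0 < z.im)
    (hG : HasDerivAt G G' z) : deriv F (-1 / z) = z ^ 2 * G' := by
  have hz0 : z ≠ 0 := by rintro rfl; simp at hz
  have h1 : HasDerivAt (fun w : ℂ => -1 / w) (1 / z ^ 2) z := by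
    have := (hasDerivAt_inv hz0).const_mul (-1)
    convert! this using 1
    field_simp
  have h2 : HasDerivAt (fun w => F (-1 / w)) (deriv F (-1 / z) * (1 / z ^ 2)) z :=
    (hd_of hF (im_S hz)).comp z h1
  have h3 : HasDerivAt (fun w => F (-1 / w)) G' z := by
    refine hG.congr_of_eventuallyEq ?_
    filter_upwards [isOpen_H.mem_nhds hz] with w hw using hS w hw
  have := h2.unique h3
  rw [← this]
  field_simp

/-- The constant `2πi`. -/
def cc : ℂ := 2 * Real.pi * I

lemma cc_ne : cc ≠ 0 := Complex.two_pi_I_ne_zero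

lemma bb_S' {z : ℂ} (hz : 0 < z.im) : bb (-1 / z) = z ^ 2 * bb z + 12 / cc * z := by
  have hpi : (Real.pi : ℂ) ≠ 0 := by exact_mod_cast Real.pi_ne_zero
  have hI0 := Complex.I_ne_zero
  rw [bb_S hz, cc]
  field_simp
  ring

lemma dbb_S {z : ℂ} (hz : 0 < z.im) :
    deriv bb (-1 / z) = z ^ 2 * (2 * z * bb z + z ^ 2 * deriv bb z + 12 / cc) := by
  refine deriv_S bb_diff (fun w hw => bb_S' hw) hz ?_
  have h := ((hasDerivAt_pow 2 z).mul (hd_of bb_diff hz)).add ((hasDerivAt_id z).const_mul (12 / cc))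
  convert! h using 1
  simp

lemma de4_S {z : ℂ} (hz : 0 < z.im) :
    deriv e4 (-1 / z) = z ^ 2 * (4 * z ^ 3 * e4 z + z ^ 4 * deriv e4 z) := by
  refine deriv_S e4_diff (fun w hw => e4_S hw) hz ?_
  have h := ((hasDerivAt_pow 4 z).mul (hd_of e4_diff hz))
  convert! h using 1

lemma de6_S {z : ℂ} (hz : 0 < z.im) :
    deriv e6 (-1 / z) = z ^ 2 * (6 * z ^ 5 * e6 z + z ^ 6 * deriv e6 z) := by
  refine deriv_S e6_diff (fun w hw => e6_S hw) hz ?_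
  have h := ((hasDerivAt_pow 6 z).mul (hd_of e6_diff hz))
  convert! h using 1

lemma ram1 {z : ℂ} (hz : 0 < z.im) : deriv bb z = cc * (bb z ^ 2 - e4 z) / 12 := by
  have hc := cc_ne
  have h := vanish 4 (by norm_num) (fun z => 12 / cc * deriv bb z - bb z ^ 2 + e4 z)
    ((((bb_diff.deriv isOpen_H).const_mul _).sub (bb_diff.pow 2)).add e4_diff)
    (fun z hz => by simp only [deriv_T (fun w hw => bb_T hw) hz, bb_T hz, e4_T hz])
    (fun z hz => by
      simp only [dbb_S hz, bb_S' hz, e4_S hz]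
      ring)
    (by
      have := (((LL_deriv bb_diff bb_lim).const_mul (12 / cc)).sub (bb_lim.pow 2)).add e4_lim
      simpa using this) hz
  field_simp at h ⊢
  linear_combination h

lemma ram2 {z : ℂ} (hz : 0 < z.im) : deriv e4 z = cc * (bb z * e4 z - e6 z) / 3 := by
  have hc := cc_ne
  have h := vanish 6 (by norm_num) (fun z => 3 / cc * deriv e4 z - bb z * e4 z + e6 z)
    ((((e4_diff.deriv isOpen_H).const_mul _).sub (bb_diff.mul e4_diff)).add e6_diff)
    (fun z hz => by simp only [deriv_T (fun w hw => e4_T hw) hz, bb_T hz, e4_T hz, e6_T hz])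
    (fun z hz => by
      simp only [de4_S hz, bb_S' hz, e4_S hz, e6_S hz]
      ring)
    (by
      have := (((LL_deriv e4_diff e4_lim).const_mul (3 / cc)).sub (bb_lim.mul e4_lim)).add e6_lim
      simpa using this) hz
  field_simp at h ⊢
  linear_combination h

lemma ram3 {z : ℂ} (hz : 0 < z.im) : deriv e6 z = cc * (bb z * e6 z - e4 z ^ 2) / 2 := by
  have hc := cc_ne
  have h := vanish 8 (by norm_num) (fun z => 2 / cc * deriv e6 z - bb z * e6 z + e4 z ^ 2)
    ((((e6_diff.deriv isOpen_H).const_mul _).sub (bb_diff.mul e6_diff)).add (e4_diff.pow 2))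
    (fun z hz => by simp only [deriv_T (fun w hw => e6_T hw) hz, bb_T hz, e4_T hz, e6_T hz])
    (fun z hz => by
      simp only [de6_S hz, bb_S' hz, e4_S hz, e6_S hz]
      ring)
    (by
      have := (((LL_deriv e6_diff e6_lim).const_mul (2 / cc)).sub (bb_lim.mul e6_lim)).add
        (e4_lim.pow 2)
      simpa using this) hz
  field_simp at h ⊢
  linear_combination h

def p1 (z : ℂ) : ℂ := 2 * bb (2 * z) - bb z
def p2 (z : ℂ) : ℂ := bb (z / 2) / 2 - bb z
def p3 (z : ℂ) : ℂ := bb ((z + 1) / 2) / 2 - bb z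

lemma im_two {z : ℂ} (hz : 0 < z.im) : 0 < (2 * z).im := by simpa using hz
lemma im_half {z : ℂ} (hz : 0 < z.im) : 0 < (z / 2).im := by simpa using hz
lemma im_half' {z : ℂ} (hz : 0 < z.im) : 0 < ((z + 1) / 2).im := by simpa using hz

lemma p1_diff : DifferentiableOn ℂ p1 {z | 0 < z.im} := by
  refine DifferentiableOn.sub (DifferentiableOn.const_mul ?_ _) bb_diff
  exact bb_diff.comp (by fun_prop) (fun z hz => im_two hz)
lemma p2_diff : DifferentiableOn ℂ p2 {z | 0 < z.im} := by
  refine DifferentiableOn.sub (DifferentiableOn.div_const ?_ _) bb_diff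
  exact bb_diff.comp (by fun_prop) (fun z hz => im_half hz)
lemma p3_diff : DifferentiableOn ℂ p3 {z | 0 < z.im} := by
  refine DifferentiableOn.sub (DifferentiableOn.div_const ?_ _) bb_diff
  exact bb_diff.comp (by fun_prop) (fun z hz => im_half' hz)

lemma LL_scale {r : ℝ} (hr : 0 < r) {g : ℂ → ℂ} (hg : ∀ z, (g z).im = z.im * r) :
    Tendsto g LL LL := by
  have : Tendsto (fun z : ℂ => z.im * r) LL atTop :=
    Tendsto.atTop_mul_const hr tendsto_comap
  unfold LL at *
  rw [tendsto_comap_iff]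
  exact this.congr fun z => (hg z).symm

lemma p1_lim : Tendsto p1 LL (𝓝 1) := by
  have h := bb_lim.comp (LL_scale (r := 2) (by norm_num) (g := fun z => 2 * z)
    (fun z => by simp [mul_comm]))
  have := (h.const_mul 2).sub bb_lim
  norm_num at this
  exact this
lemma p2_lim : Tendsto p2 LL (𝓝 (-1 / 2)) := by
  have h := bb_lim.comp (LL_scale (r := 1 / 2) (by norm_num) (g := fun z => z / 2)
    (fun z => by simp [div_eq_mul_inv]))
  have := (h.div_const 2).sub bb_lim
  norm_num at this
  norm_num
  exact this
lemma p3_lim : Tendsto p3 LL (𝓝 (-1 / 2)) := by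
  have h := bb_lim.comp (LL_scale (r := 1 / 2) (by norm_num) (g := fun z => (z + 1) / 2)
    (fun z => by simp [div_eq_mul_inv]))
  have := (h.div_const 2).sub bb_lim
  norm_num at this
  norm_num
  exact this

lemma p1_T {z : ℂ} (hz : 0 < z.im) : p1 (z + 1) = p1 z := by
  have : 2 * (z + 1) = 2 * z + 1 + 1 := by ring
  rw [p1, p1, this, bb_T (by simpa using hz), bb_T (by simpa using hz), bb_T hz]
lemma p2_T {z : ℂ} (hz : 0 < z.im) : p2 (z + 1) = p3 z := by
  rw [p2, p3, bb_T hz]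
lemma p3_T {z : ℂ} (hz : 0 < z.im) : p3 (z + 1) = p2 z := by
  have : (z + 1 + 1) / 2 = z / 2 + 1 := by ring
  rw [p2, p3, this, bb_T (by simpa using hz), bb_T hz]

lemma p1_S {z : ℂ} (hz : 0 < z.im) : p1 (-1 / z) = z ^ 2 * p2 z := by
  have hz0 : z ≠ 0 := by rintro rfl; simp at hz
  have : 2 * (-1 / z) = -1 / (z / 2) := by field_simp
  rw [p1, p2, this, bb_S' (im_half hz), bb_S' hz]
  ring
lemma p2_S {z : ℂ} (hz : 0 < z.im) : p2 (-1 / z) = z ^ 2 * p1 z := by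
  have hz0 : z ≠ 0 := by rintro rfl; simp at hz
  have : (-1 / z) / 2 = -1 / (2 * z) := by field_simp
  rw [p1, p2, this, bb_S' (im_two hz), bb_S' hz]
  ring
lemma p3_S {z : ℂ} (hz : 0 < z.im) : p3 (-1 / z) = z ^ 2 * p3 z := by
  have hz0 : z ≠ 0 := by rintro rfl; simp at hz
  have hz1 : z + 1 ≠ 0 := by
    intro h
    have := congrArg Complex.im h
    simp at this
    linarith
  set w := (z + 1) / 2 with hw
  have hwi : 0 < w.im := im_half' hz
  set u := -1 / w + 1 + 1 with hu
  have hui : 0 < u.im := by simpa [hu] using im_S hwi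
  have hu' : u = 2 * z / (z + 1) := by rw [hu, hw]; field_simp; ring
  have e : (-1 / z + 1) / 2 = -1 / u + 1 := by rw [hu']; field_simp; ring
  have hbu : bb u = w ^ 2 * bb w + 12 / cc * w := by
    rw [hu, bb_T (by simpa using im_S hwi), bb_T (im_S hwi), bb_S' hwi]
  rw [p3, p3, e, bb_T (im_S hui), bb_S' hui, hbu, bb_S' hz, ← hw]
  have e1 : u * w = z := by rw [hu', hw]; field_simp
  have e2 : u * z + u = 2 * z := by rw [hu']; field_simp
  linear_combination (1 / 2 * bb w * (u * w + z) + 6 / cc * u) * e1 + 6 / cc * e2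

lemma s1_zero {z : ℂ} (hz : 0 < z.im) : p1 z + p2 z + p3 z = 0 :=
  vanish 2 (by norm_num) (fun z => p1 z + p2 z + p3 z) ((p1_diff.add p2_diff).add p3_diff)
    (fun z hz => by simp only [p1_T hz, p2_T hz, p3_T hz]; ring)
    (fun z hz => by simp only [p1_S hz, p2_S hz, p3_S hz]; ring)
    (by
      have := (p1_lim.add p2_lim).add p3_lim
      norm_num at this
      exact this) hz

lemma s2_zero {z : ℂ} (hz : 0 < z.im) :
    p1 z * p2 z + p1 z * p3 z + p2 z * p3 z + 3 / 4 * e4 z = 0 :=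
  vanish 4 (by norm_num) (fun z => p1 z * p2 z + p1 z * p3 z + p2 z * p3 z + 3 / 4 * e4 z)
    ((((p1_diff.mul p2_diff).add (p1_diff.mul p3_diff)).add (p2_diff.mul p3_diff)).add
      (e4_diff.const_mul _))
    (fun z hz => by simp only [p1_T hz, p2_T hz, p3_T hz, e4_T hz]; ring)
    (fun z hz => by simp only [p1_S hz, p2_S hz, p3_S hz, e4_S hz]; ring)
    (by
      have := (((p1_lim.mul p2_lim).add (p1_lim.mul p3_lim)).add (p2_lim.mul p3_lim)).add
        (e4_lim.const_mul (3 / 4))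
      norm_num at this
      exact this) hz

lemma s3_zero {z : ℂ} (hz : 0 < z.im) : p1 z * p2 z * p3 z - 1 / 4 * e6 z = 0 :=
  vanish 6 (by norm_num) (fun z => p1 z * p2 z * p3 z - 1 / 4 * e6 z)
    (((p1_diff.mul p2_diff).mul p3_diff).sub (e6_diff.const_mul _))
    (fun z hz => by simp only [p1_T hz, p2_T hz, p3_T hz, e6_T hz]; ring)
    (fun z hz => by simp only [p1_S hz, p2_S hz, p3_S hz, e6_S hz]; ring)
    (by
      have := ((p1_lim.mul p2_lim).mul p3_lim).sub (e6_lim.const_mul (1 / 4))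
      norm_num at this
      exact this) hz

lemma cubic {z : ℂ} (hz : 0 < z.im) : e6 z = 4 * p1 z ^ 3 - 3 * e4 z * p1 z := by
  linear_combination (-4 * p1 z ^ 2) * s1_zero hz + 4 * p1 z * s2_zero hz - 4 * s3_zero hz

lemma nonzero {z : ℂ} (hz : 0 < z.im) : 4 * p1 z ^ 2 - e4 z ≠ 0 := by
  intro h
  have h1 := ModularForm.discriminant_eq_E₄_cube_sub_E₆_sq (ofComplex z)
  have h2 : e4 z ^ 3 - e6 z ^ 2 = 0 := by
    rw [cubic hz, show e4 z = 4 * p1 z ^ 2 by linear_combination -h]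
    ring
  simp only [e4, e6] at h2
  rw [h2, zero_div] at h1
  exact ModularForm.discriminant_ne_zero _ h1

lemma dp1 {z : ℂ} (hz : 0 < z.im) :
    deriv p1 z = cc * (bb z * p1 z - 2 * p1 z ^ 2 + e4 z) / 6 := by
  have h1 := hd_of p1_diff hz
  have h4 := hd_of e4_diff hz
  have hr := ((h1.pow 3).const_mul 4).sub ((h4.const_mul 3).mul h1)
  have h6 : HasDerivAt e6 _ z := hr.congr_of_eventuallyEq (by
    filter_upwards [isOpen_H.mem_nhds hz] with w hw using cubic hw)
  have h := h6.unique (hd_of e6_diff hz)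
  rw [ram3 hz, ram2 hz, cubic hz] at h
  apply mul_left_cancel₀ (nonzero hz)
  simp at h
  linear_combination 1 / 3 * h

lemma bb_two_deriv {z : ℂ} (hz : 0 < z.im) :
    deriv p1 z = 4 * deriv bb (2 * z) - deriv bb z := by
  have h2 : HasDerivAt (fun w => bb (2 * w)) (deriv bb (2 * z) * (2 * 1)) z :=
    (hd_of bb_diff (im_two hz)).comp z ((hasDerivAt_id z).const_mul 2)
  have := (h2.const_mul 2).sub (hd_of bb_diff hz)
  have h3 : HasDerivAt p1 _ z := this
  rw [h3.deriv]
  ring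

lemma e4_two {z : ℂ} (hz : 0 < z.im) : 4 * e4 (2 * z) + e4 z = 5 * p1 z ^ 2 := by
  have h := bb_two_deriv hz
  rw [dp1 hz, ram1 hz, ram1 (im_two hz)] at h
  have hc := cc_ne
  apply mul_left_cancel₀ hc
  have e : bb (2 * z) = (p1 z + bb z) / 2 := by rw [p1]; ring
  rw [e] at h
  linear_combination 12 * h

/-- The Lambert series term. -/
def lt (k : ℕ) (r : ℂ) (n : ℕ) : ℂ := (n : ℂ) ^ k * r ^ n / (1 - r ^ n)

lemma lt_summable (k : ℕ) {r : ℂ} (hr : ‖r‖ < 1) : Summable (lt k r) :=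
  summable_norm_pow_mul_geometric_div_one_sub k hr

lemma lt_zero (k : ℕ) (r : ℂ) : lt k r 0 = 0 := by simp [lt]

lemma lt_even (k : ℕ) (r : ℂ) (n : ℕ) : lt k r (2 * n) = 2 ^ k * lt k (r ^ 2) n := by
  simp only [lt, ← pow_mul]
  push_cast
  rw [mul_pow]
  ring

lemma lt_sigma (k : ℕ) {r : ℂ} (hr : ‖r‖ < 1) :
    ∑' n : ℕ+, (ArithmeticFunction.sigma k n : ℂ) * r ^ (n : ℕ) = ∑' n, lt k r n := by
  rw [← tsum_pow_div_one_sub_eq_tsum_sigma hr k,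
    tsum_pnat_eq_tsum_succ (f := fun n : ℕ => (n : ℂ) ^ k * r ^ n / (1 - r ^ n)),
    (lt_summable k hr).tsum_eq_zero_add, lt_zero, zero_add]
  rfl

lemma sq_lt {r : ℂ} (hr : ‖r‖ < 1) : ‖r ^ 2‖ < 1 := by
  rw [norm_pow]
  exact pow_lt_one₀ (norm_nonneg _) hr (by norm_num)

lemma lt_alt (k : ℕ) {r : ℂ} (hr : ‖r‖ < 1) :
    ∑' n : ℕ, (-1 : ℂ) ^ (n + 1) * lt k r (n + 1)
      = 2 * 2 ^ k * ∑' n, lt k (r ^ 2) n - ∑' n, lt k r n := by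
  have hs := lt_summable k hr
  have hs2 := lt_summable k (sq_lt hr)
  have he : Summable fun n => lt k r (2 * n) := hs.comp_injective (fun a b h => by simpa using h)
  have ho : Summable fun n => lt k r (2 * n + 1) :=
    hs.comp_injective (fun a b h => by simpa using h)
  have h1 := tsum_even_add_odd he ho
  have hae : (fun n : ℕ => (-1 : ℂ) ^ (2 * n) * lt k r (2 * n)) = fun n => lt k r (2 * n) := by
    funext n; simp [pow_mul]
  have hao : (fun n : ℕ => (-1 : ℂ) ^ (2 * n + 1) * lt k r (2 * n + 1))
      = fun n => -lt k r (2 * n + 1) := by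
    funext n; simp [pow_mul, pow_succ]
  have h2 := tsum_even_add_odd (f := fun n : ℕ => (-1 : ℂ) ^ n * lt k r n)
    (by rw [hae]; exact he) (by rw [hao]; exact ho.neg)
  rw [hae, hao, tsum_neg] at h2
  have hsa : Summable fun n : ℕ => (-1 : ℂ) ^ n * lt k r n := by
    refine Summable.of_norm ?_
    simpa using hs.norm
  rw [hsa.tsum_eq_zero_add, lt_zero] at h2
  have h3 : ∑' n, lt k r (2 * n) = 2 ^ k * ∑' n, lt k (r ^ 2) n := by
    rw [← tsum_mul_left]
    exact tsum_congr (lt_even k r)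
  rw [h3] at h1 h2
  linear_combination -h2 - h1

lemma qq_lt {z : ℂ} (hz : 0 < z.im) : ‖qq z‖ < 1 := by
  rw [qq, norm_qq, Real.exp_lt_one_iff]
  have := Real.pi_pos
  nlinarith [mul_pos this hz]

lemma qq_two (z : ℂ) : qq (2 * z) = qq z ^ 2 := by
  rw [qq, qq, ← Complex.exp_nat_mul]
  congr 1
  push_cast
  ring

lemma bb_lt {z : ℂ} (hz : 0 < z.im) : bb z = 1 - 24 * ∑' n, lt 1 (qq z) n := by
  rw [bb_eq hz, ← lt_sigma 1 (qq_lt hz)]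
  rfl

lemma e4_lt {z : ℂ} (hz : 0 < z.im) : e4 z = 1 + 240 * ∑' n, lt 3 (qq z) n := by
  rw [e4_eq hz, ← lt_sigma 3 (qq_lt hz)]
  rfl

lemma EP_eq {z : ℂ} (hz : 0 < z.im) : EP z = (2 * p1 z + bb z) / 3 := by
  have h : EP z = 1 - 8 * ∑' n : ℕ, (-1 : ℂ) ^ (n + 1) * lt 1 (qq z) (n + 1) := by
    rw [EP]
    congr 2
    refine tsum_congr fun n => ?_
    rw [lt]; push_cast; ring
  rw [h, lt_alt 1 (qq_lt hz), p1, bb_lt hz, bb_lt (im_two hz), qq_two]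
  ring

lemma EQ_eq {z : ℂ} (hz : 0 < z.im) : EQ z = (4 * p1 z ^ 2 - e4 z) / 3 := by
  have h : EQ z = 1 + 16 * ∑' n : ℕ, (-1 : ℂ) ^ (n + 1) * lt 3 (qq z) (n + 1) := by
    rw [EQ]
    congr 2
    refine tsum_congr fun n => ?_
    rw [lt]; push_cast; ring
  have h4 := e4_two hz
  rw [e4_lt (im_two hz), qq_two, e4_lt hz] at h4
  rw [h, lt_alt 3 (qq_lt hz), e4_lt hz]
  linear_combination 4 / 15 * h4

lemma EPt_eq {z : ℂ} (hz : 0 < z.im) : EPt z = p1 z := by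
  have hq := qq_lt hz
  have hs := lt_summable 1 hq
  have hs2 := lt_summable 1 (sq_lt hq)
  have h : EPt z = 1 + 24 * ∑' n : ℕ, (lt 1 (qq z) (n + 1) - 2 * lt 1 (qq z ^ 2) (n + 1)) := by
    rw [EPt]
    congr 2
    refine tsum_congr fun n => ?_
    rw [lt, lt]
    have hx : ‖qq z ^ (n + 1)‖ < 1 := by
      rw [norm_pow]
      exact pow_lt_one₀ (norm_nonneg _) hq (by omega)
    rw [← pow_mul, mul_comm 2 (n + 1), pow_mul]
    generalize qq z ^ (n + 1) = x at hx
    have a1 : 1 - x ≠ 0 := by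
      intro h0
      have : x = 1 := by linear_combination -h0
      simp [this] at hx
    have a2 : 1 + x ≠ 0 := by
      intro h0
      have : x = -1 := by linear_combination h0
      simp [this] at hx
    have a3 : 1 - x ^ 2 = (1 - x) * (1 + x) := by ring
    rw [a3]
    push_cast
    field_simp
    ring
  rw [h, Summable.tsum_sub ((summable_nat_add_iff 1).mpr hs)
    (((summable_nat_add_iff 1).mpr hs2).mul_left 2), tsum_mul_left,
    p1, bb_lt hz, bb_lt (im_two hz), qq_two, hs.tsum_eq_zero_add, hs2.tsum_eq_zero_add,
    lt_zero, lt_zero]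
  ring

/-- Ramamani's analogue of the Ramanujan system on `Γ₀(2)`. -/
theorem ramamani_system :
    ∀ τ : ℂ, 0 < τ.im →
      nderiv EP τ = (EP τ ^ 2 - EQ τ) / 4 ∧
      nderiv EPt τ = (EP τ * EPt τ - EQ τ) / 2 ∧
      nderiv EQ τ = (EP τ - EPt τ) * EQ τ := by
  intro τ hτ
  have h1 := hd_of p1_diff hτ
  have hb := hd_of bb_diff hτ
  have h4 := hd_of e4_diff hτ
  have hP : HasDerivAt EP ((2 * deriv p1 τ + deriv bb τ) / 3) τ :=
    (((h1.const_mul 2).add hb).div_const 3).congr_of_eventuallyEq (by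
      filter_upwards [isOpen_H.mem_nhds hτ] with w hw using EP_eq hw)
  have hPt : HasDerivAt EPt (deriv p1 τ) τ :=
    h1.congr_of_eventuallyEq (by
      filter_upwards [isOpen_H.mem_nhds hτ] with w hw using EPt_eq hw)
  have hQ : HasDerivAt EQ ((4 * (2 * p1 τ * deriv p1 τ) - deriv e4 τ) / 3) τ := by
    have h := ((((h1.pow 2).const_mul 4).sub h4).div_const 3)
    have h' : HasDerivAt EQ _ τ := h.congr_of_eventuallyEq (by
      filter_upwards [isOpen_H.mem_nhds hτ] with w hw using EQ_eq hw)
    convert! h' using 1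
    simp
  have hc := cc_ne
  have hn : ∀ F : ℂ → ℂ, nderiv F τ = cc⁻¹ * deriv F τ := fun F => rfl
  rw [hn, hn, hn, hP.deriv, hPt.deriv, hQ.deriv, dp1 hτ, ram1 hτ, ram2 hτ, EP_eq hτ, EPt_eq hτ,
    EQ_eq hτ, cubic hτ]
  refine ⟨?_, ?_, ?_⟩ <;> field_simp <;> ring
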